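/- Let H be a finite-dimensional Hopf algebra over a field F. Then H is a Frobenius algebra: there exists a Frobenius form on H, i.e. a nondegenerate F-bilinear form β : H × H → F with β(x·y, z) = β(x, y·z) for all x, y, z ∈ H. Equivalently, there is an isomorphism of left H-modules from H to its linear dual H^∨ = Hom_F(H, F), where the left H-action on H^∨ is given by (h·f)(k) := f(k·h). -/

import Mathlib

/-!
The dual `H* = Hom(H, R)` is an algebra under convolution, and `H` acts on it by translating the
argument of a functional. A left integral in `H*` is a functional `l` with `g * l = g 1 • l` for
all `g`. For a basis `b` with dual basis `b*`, each functional `f` has an averaged form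
`∑ k, (b*ₖ ∘ S * f) (· S(bₖ))`, which is a left integral; conversely `f` is a sum of translates of
such integrals, as in the fundamental theorem of Hopf modules. Applying this to `f = 1` and
evaluating at `1` writes `1` as a sum of values of integrals, so over a local ring some integral
`l` takes a unit value.

The functionals `l (a · )`, `a ∈ H`, form a left ideal of `H*`, and this ideal contains every value
of `l` as a scalar. If some value is a unit, every functional is therefore of the form `l (a · )`;
by equality of ranks `(x, y) ↦ l (x * y)` is a perfect pairing, and it is clearly associative.
-/

open Coalgebra HopfAlgebra LinearMap TensorProduct WithConv
open Algebra.TensorProduct (includeLeft includeRight)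

namespace HopfDual

section Antipode

variable {R H : Type*} [CommSemiring R] [Semiring H] [HopfAlgebra R H]

lemma comp_antipode_convMul_algHom {A : Type*} [Semiring A] [Algebra R A] (φ : H →ₐ[R] A) :
    toConv (φ.toLinearMap ∘ₗ antipode R) * toConv φ.toLinearMap = 1 := by
  have h := algHom_comp_convMul_distrib φ (toConv (antipode R)) (toConv LinearMap.id)
  rw [antipode_mul_id] at h
  ext x
  simpa using congr($h.symm x)

lemma includeLeft_convMul_includeRight :
    toConv (includeLeft : H →ₐ[R] H ⊗[R] H).toLinearMap *
      toConv (includeRight : H →ₐ[R] H ⊗[R] H).toLinearMap = toConv comul := by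
  ext x
  simp [(ℛ R x).convMul_apply, (ℛ R x).eq]

-- Both sides are convolution inverses of `comul = includeLeft * includeRight`.
lemma comul_comp_antipode :
    toConv (comul ∘ₗ antipode R) =
      toConv ((includeRight : H →ₐ[R] H ⊗[R] H).toLinearMap ∘ₗ antipode R) *
        toConv ((includeLeft : H →ₐ[R] H ⊗[R] H).toLinearMap ∘ₗ antipode R) := by
  refine (left_inv_eq_right_inv ?_ (comul_right_inv (R := R) (C := H))).symm
  rw [← includeLeft_convMul_includeRight, mul_assoc, ← mul_assoc _ (toConv includeLeft.toLinearMap),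
    comp_antipode_convMul_algHom, one_mul, comp_antipode_convMul_algHom]

lemma sum_comul_antipode_mul_tmul_one {a : H} {κ : Type*} (r : Repr R a κ) :
    ∑ i ∈ r.index, comul (R := R) (antipode R (r.left i)) * (r.right i ⊗ₜ 1) =
      1 ⊗ₜ antipode R a := by
  have h : toConv (comul ∘ₗ antipode R) * toConv includeLeft.toLinearMap =
      toConv ((includeRight : H →ₐ[R] H ⊗[R] H).toLinearMap ∘ₗ antipode R) := by
    rw [comul_comp_antipode, mul_assoc, comp_antipode_convMul_algHom, mul_one]
  simpa [r.convMul_apply] using congr($h a)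

lemma sum_antipode_tmul_one_mul_comul {a : H} {κ : Type*} (r : Repr R a κ) :
    ∑ i ∈ r.index, (antipode R (r.left i) ⊗ₜ 1) * comul (R := R) (r.right i) = 1 ⊗ₜ a := by
  have h : toConv (includeLeft.toLinearMap ∘ₗ antipode R) * toConv comul =
      toConv (includeRight : H →ₐ[R] H ⊗[R] H).toLinearMap := by
    rw [← includeLeft_convMul_includeRight, ← mul_assoc, comp_antipode_convMul_algHom, one_mul]
  simpa [r.convMul_apply] using congr($h a)

/-- The transpose `f ↦ f ∘ S` of the antipode. It is the antipode of the dual Hopf algebra when `H`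
is finite and projective. -/
def dualAntipode : WithConv (H →ₗ[R] R) →ₗ[R] WithConv (H →ₗ[R] R) where
  toFun f := toConv (f.ofConv ∘ₗ antipode R)
  map_add' _ _ := rfl
  map_smul' _ _ := rfl

@[simp]
lemma dualAntipode_apply (f : WithConv (H →ₗ[R] R)) (x : H) :
    dualAntipode f x = f (antipode R x) := rfl

lemma dualAntipode_one : dualAntipode (1 : WithConv (H →ₗ[R] R)) = 1 := by
  ext x
  simp

lemma dualAntipode_convMul (f g : WithConv (H →ₗ[R] R)) :
    dualAntipode (f * g) = dualAntipode g * dualAntipode f := by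
  ext x
  have h := congr($(comul_comp_antipode (R := R) (H := H)) x)
  rw [(ℛ R x).convMul_apply] at h ⊢
  simp only [LinearMap.comp_apply] at h
  simp [h, mul_comm]

end Antipode

section Translate

variable {R H : Type*} [CommSemiring R] [Semiring H]

section Algebra

variable [Algebra R H]

/-- The left action of `H` on its dual by right translation, `(a • f) x = f (x * a)`. -/
def rightTranslate : H →ₐ[R] Module.End R (WithConv (H →ₗ[R] R)) :=
  AlgHom.ofLinearMap
    (LinearMap.mk₂ R (fun a f ↦ toConv (f.ofConv ∘ₗ mulRight R a))
      (fun a b f ↦ by ext; simp [mul_add])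
      (fun c a f ↦ by ext; simp)
      (fun a f g ↦ by ext; simp)
      (fun c a f ↦ by ext; simp))
    (by ext; simp)
    (fun a b ↦ by ext; simp [mul_assoc])

/-- Left translation `f ↦ f (a * ·)` of functionals, which makes the dual of `H` a right module;
it is recorded only as a linear map because it reverses products in `a`. -/
def leftTranslate : H →ₗ[R] Module.End R (WithConv (H →ₗ[R] R)) :=
  LinearMap.mk₂ R (fun a f ↦ toConv (f.ofConv ∘ₗ mulLeft R a))
    (fun a b f ↦ by ext; simp [add_mul])
    (fun c a f ↦ by ext; simp)
    (fun a f g ↦ by ext; simp)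
    (fun c a f ↦ by ext; simp)

@[simp]
lemma rightTranslate_apply (a x : H) (f : WithConv (H →ₗ[R] R)) :
    rightTranslate a f x = f (x * a) := rfl

@[simp]
lemma leftTranslate_apply (a x : H) (f : WithConv (H →ₗ[R] R)) :
    leftTranslate a f x = f (a * x) := rfl

end Algebra

section Bialgebra

variable [Bialgebra R H]

lemma convMul_rightTranslate_apply (a x : H) (g f : WithConv (H →ₗ[R] R)) :
    (g * rightTranslate a f) x =
      mul' R R (map g.ofConv f.ofConv (comul x * 1 ⊗ₜ a)) := by
  have h : map g.ofConv (rightTranslate a f).ofConv =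
      map g.ofConv f.ofConv ∘ₗ mulRight R (1 ⊗ₜ a) := by ext; simp
  simp [h]

lemma rightTranslate_convMul_apply (a x : H) (g f : WithConv (H →ₗ[R] R)) :
    (rightTranslate a g * f) x =
      mul' R R (map g.ofConv f.ofConv (comul x * a ⊗ₜ 1)) := by
  have h : map (rightTranslate a g).ofConv f.ofConv =
      map g.ofConv f.ofConv ∘ₗ mulRight R (a ⊗ₜ 1) := by ext; simp
  simp [h]

lemma convMul_leftTranslate_apply (a x : H) (g f : WithConv (H →ₗ[R] R)) :
    (g * leftTranslate a f) x =
      mul' R R (map g.ofConv f.ofConv (1 ⊗ₜ a * comul x)) := by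
  have h : map g.ofConv (leftTranslate a f).ofConv =
      map g.ofConv f.ofConv ∘ₗ mulLeft R (1 ⊗ₜ a) := by ext; simp
  simp [h]

lemma leftTranslate_convMul_apply (a x : H) (g f : WithConv (H →ₗ[R] R)) :
    (leftTranslate a g * f) x =
      mul' R R (map g.ofConv f.ofConv (a ⊗ₜ 1 * comul x)) := by
  have h : map (leftTranslate a g).ofConv f.ofConv =
      map g.ofConv f.ofConv ∘ₗ mulLeft R (a ⊗ₜ 1) := by ext; simp
  simp [h]

end Bialgebra

variable [HopfAlgebra R H] {a : H} {κ : Type*} (r : Repr R a κ) (g f : WithConv (H →ₗ[R] R))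

lemma convMul_rightTranslate_antipode :
    g * rightTranslate (antipode R a) f =
      ∑ i ∈ r.index,
        rightTranslate (antipode R (r.left i)) (rightTranslate (r.right i) g * f) := by
  ext x
  rw [convMul_rightTranslate_apply, ← sum_comul_antipode_mul_tmul_one r]
  simp only [Finset.mul_sum, map_sum, ofConv_sum, LinearMap.sum_apply, rightTranslate_apply,
    rightTranslate_convMul_apply, Bialgebra.comul_mul, mul_assoc]

lemma convMul_leftTranslate :
    g * leftTranslate a f =
      ∑ i ∈ r.index,
        leftTranslate (r.right i) (leftTranslate (antipode R (r.left i)) g * f) := by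
  ext x
  rw [convMul_leftTranslate_apply, ← sum_antipode_tmul_one_mul_comul r]
  simp only [Finset.sum_mul, map_sum, ofConv_sum, LinearMap.sum_apply, leftTranslate_apply,
    leftTranslate_convMul_apply, Bialgebra.comul_mul, mul_assoc]

end Translate

section DualCoord

variable {R C ι : Type*} [CommSemiring R] [AddCommMonoid C] [Module R C] (b : Module.Basis ι R C)

/-- The coordinate functionals of a basis, as elements of the convolution algebra. -/
noncomputable def dualCoord (i : ι) : WithConv (C →ₗ[R] R) := toConv (b.coord i)

lemma sum_apply_smul_dualCoord [Fintype ι] (f : WithConv (C →ₗ[R] R)) :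
    ∑ i, f (b i) • dualCoord b i = f := by
  apply WithConv.ext
  simp only [dualCoord, ofConv_sum, ofConv_smul]
  exact b.sum_dual_apply_smul_coord f.ofConv

lemma sum_dualCoord_apply_smul [Fintype ι] (x : C) : ∑ i, dualCoord b i x • b i = x :=
  b.sum_repr x

variable [Coalgebra R C]

lemma repr_comul_eq_convMul_dualCoord (x : C) (i j : ι) :
    (b.tensorProduct b).repr (comul x) (i, j) = (dualCoord b i * dualCoord b j) x := by
  have h : (b.tensorProduct b).coord (i, j) = mul' R R ∘ₗ map (b.coord i) (b.coord j) := by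
    ext
    simp [mul_comm]
  exact congr($h (comul x))

/-- The expansion `Δ x = ∑ i j, (b*ᵢ * b*ⱼ) x • bᵢ ⊗ bⱼ` of a coproduct in a basis `b`. The scalar
is absorbed into the right-hand factor. -/
noncomputable def basisRepr [Fintype ι] (x : C) : Repr R x (ι × ι) where
  index := Finset.univ
  left p := b p.1
  right p := (dualCoord b p.1 * dualCoord b p.2) x • b p.2
  eq := by
    simp_rw [← repr_comul_eq_convMul_dualCoord, tmul_smul, ← Module.Basis.tensorProduct_apply]
    exact (b.tensorProduct b).sum_repr (comul x)

end DualCoord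

section CanonicalElement

variable {R H ι : Type*} [CommSemiring R] [Semiring H] [HopfAlgebra R H] [Fintype ι]
  (b : Module.Basis ι R H)

lemma sum_rightTranslate_convMul_dualAntipode (g : WithConv (H →ₗ[R] R)) :
    ∑ j, rightTranslate (b j) g * dualAntipode (dualCoord b j) = g 1 • 1 := by
  ext x
  let r := ℛ R x
  calc (∑ j, rightTranslate (b j) g * dualAntipode (dualCoord b j)).ofConv x
      = ∑ i ∈ r.index, g (r.left i * ∑ j, dualCoord b j (antipode R (r.right i)) • b j) := by
        simp only [ofConv_sum, LinearMap.sum_apply, r.convMul_apply, Finset.mul_sum, map_sum]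
        rw [Finset.sum_comm]
        simp [mul_comm]
    _ = g (∑ i ∈ r.index, r.left i * antipode R (r.right i)) := by
        simp only [sum_dualCoord_apply_smul, map_sum]
    _ = (g 1 • (1 : WithConv (H →ₗ[R] R))).ofConv x := by
        simp [sum_mul_antipode_eq_smul, mul_comm]

lemma sum_dualAntipode_convMul_leftTranslate (f : WithConv (H →ₗ[R] R)) (y : H) :
    ∑ j, dualAntipode (dualCoord b j) * leftTranslate (y * b j) f = f y • 1 := by
  ext x
  let r := ℛ R x
  calc (∑ j, dualAntipode (dualCoord b j) * leftTranslate (y * b j) f).ofConv x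
      = ∑ i ∈ r.index, f (y * (∑ j, dualCoord b j (antipode R (r.left i)) • b j) * r.right i) := by
        simp only [ofConv_sum, LinearMap.sum_apply, r.convMul_apply, Finset.mul_sum,
          Finset.sum_mul, map_sum]
        rw [Finset.sum_comm]
        simp
    _ = f (y * ∑ i ∈ r.index, antipode R (r.left i) * r.right i) := by
        simp only [sum_dualCoord_apply_smul, Finset.mul_sum, map_sum, mul_assoc]
    _ = (f y • (1 : WithConv (H →ₗ[R] R))).ofConv x := by
        simp [sum_antipode_mul_eq_smul, mul_comm]

end CanonicalElement

section Integral

/-- Left integrals in the dual algebra of `H`: functionals `l` with `g * l = g 1 • l` for every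
functional `g`, evaluation at `1` being the counit of the dual. -/
def IsLeftIntegral {R H : Type*} [CommSemiring R] [Semiring H] [Bialgebra R H]
    (l : WithConv (H →ₗ[R] R)) : Prop :=
  ∀ g : WithConv (H →ₗ[R] R), g * l = g 1 • l

variable {R H : Type*} [CommSemiring R] [Semiring H] [HopfAlgebra R H]

section Basis

variable {ι : Type*} [Fintype ι] (b : Module.Basis ι R H)

/-- The projection `f ↦ S(f₍₋₁₎) • f₍₀₎` of the dual of `H` onto its left integrals, these being the
coinvariants of the left Hopf module with action `rightTranslate` and coaction
`f ↦ ∑ k, bₖ ⊗ (b*ₖ ∘ S * f)`. -/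
noncomputable def integralOf (f : WithConv (H →ₗ[R] R)) : WithConv (H →ₗ[R] R) :=
  ∑ k, rightTranslate (antipode R (b k)) (dualAntipode (dualCoord b k) * f)

theorem isLeftIntegral_integralOf (f : WithConv (H →ₗ[R] R)) :
    IsLeftIntegral (integralOf b f) := by
  intro g
  calc g * integralOf b f
      = ∑ k, ∑ p : ι × ι, rightTranslate (antipode R (b p.1))
          (rightTranslate ((dualCoord b p.1 * dualCoord b p.2) (b k) • b p.2) g *
            (dualAntipode (dualCoord b k) * f)) := by
        simp only [integralOf, Finset.mul_sum]
        exact Finset.sum_congr rfl fun k _ ↦ convMul_rightTranslate_antipode (basisRepr b (b k)) _ _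
    _ = ∑ p : ι × ι, rightTranslate (antipode R (b p.1)) (rightTranslate (b p.2) g *
          (dualAntipode (∑ k, (dualCoord b p.1 * dualCoord b p.2) (b k) • dualCoord b k) * f)) := by
        rw [Finset.sum_comm]
        simp only [map_sum, map_smul, Finset.sum_mul, Finset.mul_sum, smul_mul_assoc,
          mul_smul_comm, LinearMap.smul_apply]
    _ = ∑ i, rightTranslate (antipode R (b i))
          ((∑ j, rightTranslate (b j) g * dualAntipode (dualCoord b j)) *
            (dualAntipode (dualCoord b i) * f)) := by
        simp only [sum_apply_smul_dualCoord, dualAntipode_convMul, Fintype.sum_prod_type,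
          Finset.sum_mul, map_sum, mul_assoc]
    _ = g 1 • integralOf b f := by
        simp only [sum_rightTranslate_convMul_dualAntipode, smul_mul_assoc, one_mul, map_smul,
          integralOf, Finset.smul_sum]

theorem sum_rightTranslate_integralOf (f : WithConv (H →ₗ[R] R)) :
    ∑ j, rightTranslate (b j) (integralOf b (dualAntipode (dualCoord b j) * f)) = f := by
  calc ∑ j, rightTranslate (b j) (integralOf b (dualAntipode (dualCoord b j) * f))
      = ∑ p : ι × ι, rightTranslate (b p.1 * antipode R (b p.2)) (dualAntipode
          (∑ k, (dualCoord b p.1 * dualCoord b p.2) (b k) • dualCoord b k) * f) := by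
        simp only [integralOf, map_sum, sum_apply_smul_dualCoord, dualAntipode_convMul,
          Fintype.sum_prod_type, map_mul, mul_assoc, Module.End.mul_apply]
    _ = ∑ k, rightTranslate
          (∑ p : ι × ι, b p.1 * antipode R ((dualCoord b p.1 * dualCoord b p.2) (b k) • b p.2))
          (dualAntipode (dualCoord b k) * f) := by
        simp only [map_sum, map_smul, Finset.sum_mul, smul_mul_assoc, mul_smul_comm,
          LinearMap.smul_apply, LinearMap.sum_apply]
        exact Finset.sum_comm
    _ = ∑ k, rightTranslate (counit (R := R) (b k) • (1 : H)) (dualAntipode (dualCoord b k) * f) :=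
        Finset.sum_congr rfl fun k _ ↦ by
          rw [← sum_mul_antipode_eq_smul (basisRepr b (b k))]
          rfl
    _ = dualAntipode (∑ k, (1 : WithConv (H →ₗ[R] R)) (b k) • dualCoord b k) * f := by
        simp [Finset.sum_mul]
    _ = f := by rw [sum_apply_smul_dualCoord, dualAntipode_one, one_mul]

end Basis

lemma IsLeftIntegral.convMul_leftTranslate {l : WithConv (H →ₗ[R] R)} (hl : IsLeftIntegral l)
    (g : WithConv (H →ₗ[R] R)) {a : H} {κ : Type*} (r : Repr R a κ) :
    g * leftTranslate a l =
      leftTranslate (∑ i ∈ r.index, g (antipode R (r.left i)) • r.right i) l := by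
  simp only [HopfDual.convMul_leftTranslate r, hl _, leftTranslate_apply, mul_one, map_smul,
    map_sum, LinearMap.sum_apply, LinearMap.smul_apply]

variable [Module.Free R H] [Module.Finite R H]

variable (R H) in
theorem exists_isLeftIntegral_isUnit_apply [IsLocalRing R] :
    ∃ (l : WithConv (H →ₗ[R] R)) (y : H), IsLeftIntegral l ∧ IsUnit (l y) := by
  let b := Module.Free.chooseBasis R H
  let l j := integralOf b (dualAntipode (dualCoord b j) * 1)
  have h : ∑ j, l j (b j) = 1 := by
    simpa [LinearMap.sum_apply, l] using congr($(sum_rightTranslate_integralOf b 1) 1)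
  obtain ⟨j, -, hj⟩ := IsLocalRing.exists_of_isUnit_sum (h ▸ isUnit_one)
  exact ⟨l j, b j, isLeftIntegral_integralOf b _, hj⟩

theorem IsLeftIntegral.surjective_leftTranslate {l : WithConv (H →ₗ[R] R)} (hl : IsLeftIntegral l)
    {y : H} (hy : IsUnit (l y)) : Function.Surjective fun a : H ↦ leftTranslate a l := by
  intro f
  let b := Module.Free.chooseBasis R H
  choose z hz using fun j ↦ show ∃ z : H, leftTranslate z l =
      f * dualAntipode (dualCoord b j) * leftTranslate (y * b j) l from
    ⟨_, (hl.convMul_leftTranslate _ (ℛ R (y * b j))).symm⟩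
  have h : leftTranslate (∑ j, z j) l = l y • f := by
    simp only [map_sum, LinearMap.sum_apply, hz, mul_assoc, ← Finset.mul_sum,
      sum_dualAntipode_convMul_leftTranslate, mul_smul_comm, mul_one]
  obtain ⟨u, hu⟩ := hy
  refine ⟨(↑u⁻¹ : R) • ∑ j, z j, ?_⟩
  simp only [map_smul, LinearMap.smul_apply, h, ← hu, smul_smul, Units.inv_mul, one_smul]

end Integral

section FrobeniusForm

variable {R H : Type*}

/-- The associative bilinear form `(x, y) ↦ l (x * y)` attached to a functional `l`. -/
def frobeniusForm [CommSemiring R] [Semiring H] [Algebra R H] (l : WithConv (H →ₗ[R] R)) :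
    H →ₗ[R] H →ₗ[R] R :=
  (LinearMap.mul R H).compr₂ l.ofConv

lemma frobeniusForm_mul_left [CommSemiring R] [Semiring H] [Algebra R H]
    (l : WithConv (H →ₗ[R] R)) (x y z : H) :
    frobeniusForm l (x * y) z = frobeniusForm l x (y * z) :=
  congr(l $(mul_assoc x y z))

theorem IsLeftIntegral.isPerfPair_frobeniusForm [CommRing R] [Ring H] [HopfAlgebra R H]
    [Module.Free R H] [Module.Finite R H] {l : WithConv (H →ₗ[R] R)} (hl : IsLeftIntegral l)
    {y : H} (hy : IsUnit (l y)) : (frobeniusForm l).IsPerfPair := by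
  let d := (Module.Free.chooseBasis R H).toDualEquiv
  have hsurj : Function.Surjective (frobeniusForm l) := fun f ↦
    let ⟨z, hz⟩ := hl.surjective_leftTranslate hy (toConv f)
    ⟨z, congr(ofConv $hz)⟩
  have hinj : Function.Injective (d.symm.toLinearMap ∘ₗ frobeniusForm l) :=
    OrzechProperty.injective_of_surjective_endomorphism _ (d.symm.surjective.comp hsurj)
  exact .of_bijective _ ⟨.of_comp hinj, hsurj⟩

end FrobeniusForm

end HopfDual

open HopfDual

theorem stmt6_general (R H : Type*) [CommRing R] [IsLocalRing R] [Ring H] [HopfAlgebra R H]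
    [Module.Free R H] [Module.Finite R H] :
    (∃ β : H →ₗ[R] H →ₗ[R] R,
        (∀ x, (∀ y, β x y = 0) → x = 0) ∧
        (∀ y, (∀ x, β x y = 0) → y = 0) ∧
        (∀ x y z, β (x * y) z = β x (y * z))) ∧
      (∃ e : H ≃ₗ[R] (H →ₗ[R] R), ∀ h x k : H, e (h * x) k = e x (k * h)) := by
  obtain ⟨l, y, hl, hy⟩ := exists_isLeftIntegral_isUnit_apply R H
  let β := frobeniusForm l
  have hβ : β.IsPerfPair := hl.isPerfPair_frobeniusForm hy
  refine ⟨⟨β, fun x hx ↦ ?_, fun z hz ↦ ?_, frobeniusForm_mul_left l⟩,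
    β.flip.toPerfPair, fun h x k ↦ (frobeniusForm_mul_left l k h x).symm⟩
  · exact (map_eq_zero_iff β hβ.bijective_left.injective).1 (LinearMap.ext hx)
  · exact (map_eq_zero_iff β.flip hβ.bijective_right.injective).1 (LinearMap.ext hz)

/-- A finite-dimensional Hopf algebra `H` over a field `F` is a Frobenius
algebra: there is a nondegenerate bilinear form `β` on `H` with `β (x*y) z = β x (y*z)`;
equivalently, there is an isomorphism of left `H`-modules `H ≅ H^∨`, where the left
`H`-action on the dual is `(h·f) k := f (k * h)`. -/
theorem stmt6
    (F : Type) [Field F] (H : Type) [Ring H] [HopfAlgebra F H] [FiniteDimensional F H] :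
    (∃ β : H →ₗ[F] H →ₗ[F] F,
        (∀ x, (∀ y, β x y = 0) → x = 0) ∧
        (∀ y, (∀ x, β x y = 0) → y = 0) ∧
        (∀ x y z, β (x * y) z = β x (y * z))) ∧
      (∃ e : H ≃ₗ[F] (H →ₗ[F] F), ∀ h x k : H, e (h * x) k = e x (k * h)) :=
  stmt6_general F H
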